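/- Let K be any field, and let G_14 ⊆ S_8 be the subgroup of order 24 generated by σ_2 = (1,3)(2,4)(5,7)(6,8), φ̃_1 = (2,3,4)(6,7,8), and κ° = (1,6)(2,5)(3,7)(4,8). Then the fixed field K(x_1,…,x_8)^{G_14} is K-rational. -/

import Mathlib

noncomputable section

/-- The rational function field `K(x_i : i ∈ I)` over `K`, realized as the fraction field
of the multivariate polynomial ring. -/
abbrev RFF (K : Type) [Field K] (I : Type) := FractionRing (MvPolynomial I K)

/-- The image of the variable `x_i` in the rational function field `K(x_i : i ∈ I)`. -/
noncomputable def Xvar (K : Type) [Field K] (I : Type) (i : I) : RFF K I :=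
  algebraMap (MvPolynomial I K) (RFF K I) (MvPolynomial.X i)

/-- Permutations of the variables as `K`-algebra automorphisms of the polynomial ring. -/
def renameHom (K : Type) [Field K] (I : Type) :
    Equiv.Perm I →* (MvPolynomial I K ≃ₐ[K] MvPolynomial I K) where
  toFun σ := MvPolynomial.renameEquiv K σ
  map_one' := MvPolynomial.renameEquiv_refl K
  map_mul' σ τ := (MvPolynomial.renameEquiv_trans K τ σ).symm

/-- The action of permutations of the variables on `K(x_i : i ∈ I)` by `K`-automorphisms,
determined by `σ(x_i) = x_{σ(i)}`. -/
noncomputable def permHom (K : Type) [Field K] (I : Type) :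
    Equiv.Perm I →* (RFF K I ≃ₐ[K] RFF K I) :=
  (IsFractionRing.fieldEquivOfAlgEquivHom K (RFF K I)).comp (renameHom K I)

/-- The fixed field `K(x_i : i ∈ I)^G` of a group `G` of permutations of the variables. -/
noncomputable def fixedSub (K : Type) [Field K] (I : Type) (G : Subgroup (Equiv.Perm I)) :
    IntermediateField K (RFF K I) :=
  IntermediateField.fixedField (G.map (permHom K I))

/-- An extension `L/K` is `K`-rational if it is purely transcendental over `K`, i.e. generated
by finitely many algebraically independent elements. -/
def IsRatExt (K : Type) [Field K] (L : Type*) [Field L] [Algebra K L] : Prop :=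
  ∃ (n : ℕ) (t : Fin n → L), AlgebraicIndependent K t ∧
    IntermediateField.adjoin K (Set.range t) = ⊤

/-!
The symmetric group `Sₙ` acts on the variables `x (i, ε)`, for `i < n` and a sign `ε = ±1`, by
permuting the indices `i` and multiplying `ε` by the sign of the permutation; `G₁₄` is the case
`n = 4`, with `x (i, 1)` and `x (i, -1)` the variables `x_{i+1}` and `x_{i+5}`.

The sums `aᵢ = x (i, 1) + x (i, -1)` are permuted by `Sₙ`. Let `θ_ε` be the sum of the monomials of
the Vandermonde determinant of `a` that belong to permutations of sign `ε`; a permutation `p` maps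
`θ_ε` to `θ_{sign p * ε}`, so `Sₙ` also permutes the elements
`wᵢ = θ₁ * x (i, 1) + θ₋₁ * x (i, -1)`. Hence the coefficients of `∏ (X - aᵢ)` and the weighted
power sums `∑ aᵢ ^ j * wᵢ`, `j < n`, are `2 n` invariants. Over the field `F` they generate, the
`aᵢ` recover the `wᵢ` (Vandermonde system) and then the `x (i, ε)` (the determinant `θ₁ - θ₋₁` is
the Vandermonde determinant, which is nonzero in every characteristic). So `K(x)` is the splitting
field of `∏ (X - aᵢ)` over `F`, its Galois group is contained in `Sₙ`, and `F` is the fixed field;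
the `2 n` generators are algebraically independent because the transcendence degree is `2 n`.
-/

open Equiv.Perm (sign)
open IntermediateField (adjoin fixedField)
open Polynomial (X C)

lemma isRatExt_adjoin_of_algebraicIndependent {K : Type} {L κ : Type*} [Field K] [Field L]
    [Algebra K L] [Finite κ] {t : κ → L} (ht : AlgebraicIndependent K t) :
    IsRatExt K (adjoin K (Set.range t)) := by
  let e := (Finite.equivFin κ).symm
  let s : Fin (Nat.card κ) → adjoin K (Set.range t) :=
    fun j ↦ ⟨t (e j), IntermediateField.subset_adjoin _ _ ⟨e j, rfl⟩⟩
  have val_comp_s : (adjoin K (Set.range t)).val ∘ s = t ∘ e := rfl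
  refine ⟨Nat.card κ, s, .of_comp (adjoin K (Set.range t)).val ?_, ?_⟩
  · rw [val_comp_s]
    exact ht.comp e e.injective
  · apply IntermediateField.lift_injective
    rw [IntermediateField.lift_adjoin, IntermediateField.lift_top, ← IntermediateField.coe_val,
      ← Set.range_comp, val_comp_s, e.surjective.range_comp]

section FieldTheory

variable {F K L : Type*} [Field F] [Field K] [Field L] [Algebra F L] [Algebra K L]

open scoped IntermediateField.algebraAdjoinAdjoin in
lemma algebraicIndependent_of_isAlgebraic_adjoin {ι κ : Type*} [Finite ι] [Finite κ]
    {x : ι → L} (hx : AlgebraicIndependent K x) {t : κ → L}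
    [Algebra.IsAlgebraic (adjoin K (Set.range t)) L] (hcard : Nat.card κ ≤ Nat.card ι) :
    AlgebraicIndependent K t := by
  have : Algebra.IsAlgebraic (Algebra.adjoin K (Set.range t)) L :=
    (IsFractionRing.comap_isAlgebraic_iff (K := adjoin K (Set.range t))).2 inferInstance
  have card_le_trdeg : (Nat.card ι : Cardinal) ≤ Algebra.trdeg K L := by
    simpa [← Nat.cast_card] using hx.lift_cardinalMk_le_trdeg
  refine (Algebra.IsAlgebraic.isTranscendenceBasis_of_lift_le_trdeg_of_finite K t ?_).1
  simpa [← Nat.cast_card] using (Nat.cast_le.2 hcard).trans card_le_trdeg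

lemma eq_of_eqOn_of_adjoin_eq_top {S : Set L} (hS : adjoin K S = ⊤) {g h : L ≃ₐ[K] L}
    (hgh : Set.EqOn g h S) : g = h := by
  have inv_mul_mem : g⁻¹ * h ∈ (⊤ : IntermediateField K L).fixingSubgroup := by
    rw [← hS, IntermediateField.mem_fixingSubgroup_iff]
    refine (IntermediateField.forall_mem_adjoin_smul_eq_self_iff K (g⁻¹ * h)).2 fun z hz ↦ ?_
    change g.symm (h z) = z
    rw [← hgh hz, g.symm_apply_apply]
  rw [IntermediateField.fixingSubgroup_top, Subgroup.mem_bot] at inv_mul_mem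
  exact inv_mul_eq_one.1 inv_mul_mem

lemma fixedField_eq_of_fixingSubgroup_le {G : Subgroup (L ≃ₐ[K] L)} {E : IntermediateField K L}
    [IsGalois E L] (hE : E ≤ fixedField G) (hG : E.fixingSubgroup ≤ G) : fixedField G = E := by
  refine le_antisymm (fun z hz ↦ ?_) hE
  have fixed_by_gal : ∀ τ : L ≃ₐ[E] L, τ z = z := fun τ ↦
    (IntermediateField.mem_fixedField_iff G z).1 hz _ (hG (E.fixingSubgroupEquiv.symm τ).2)
  obtain ⟨w, rfl⟩ := (InfiniteGalois.mem_range_algebraMap_iff_fixed z).2 fixed_by_gal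
  exact w.2

lemma isGalois_of_coeff_prod_X_sub_C_mem {ι : Type*} [Fintype ι] {a : ι → L}
    (ha : Function.Injective a)
    (hcoeff : ∀ k, (∏ i, (X - C (a i))).coeff k ∈ Set.range (algebraMap F L))
    (hgen : adjoin F (Set.range a) = ⊤) : IsGalois F L := by
  obtain ⟨P, hP⟩ := (Polynomial.mem_lifts _).1 ((Polynomial.lifts_iff_coeff_lifts _).2 hcoeff)
  have P_separable : P.Separable := by
    rwa [← Polynomial.separable_map (algebraMap F L), hP, Polynomial.separable_prod_X_sub_C_iff]
  have rootSet_eq : P.rootSet L = Set.range a := by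
    ext z
    rw [Polynomial.mem_rootSet_of_ne P_separable.ne_zero, ← Polynomial.eval_map_algebraMap, hP,
      Polynomial.eval_prod, Finset.prod_eq_zero_iff]
    simp [sub_eq_zero, eq_comm]
  have : P.IsSplittingField F L := by
    rw [isSplittingField_iff_intermediateField, rootSet_eq, hP]
    exact ⟨.prod fun i _ ↦ .X_sub_C _, hgen⟩
  exact .of_separable_splitting_field P_separable

lemma mem_range_algebraMap_of_mulVec {m : Type*} [Fintype m] [DecidableEq m] {M : Matrix m m F}
    (hM : M.det ≠ 0) {w : m → L}
    (h : ∀ j, (M.map (algebraMap F L)).mulVec w j ∈ Set.range (algebraMap F L)) (i : m) :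
    w i ∈ Set.range (algebraMap F L) := by
  choose z hz using h
  have det_map_ne_zero : (M.map (algebraMap F L)).det ≠ 0 := by
    rw [← RingHom.mapMatrix_apply, ← RingHom.map_det]
    exact (map_ne_zero _).2 hM
  have w_eq : w = algebraMap F L ∘ M⁻¹.mulVec z := by
    apply Matrix.mulVec_injective_of_det_ne_zero det_map_ne_zero
    funext j
    rw [← hz, ← RingHom.map_mulVec, Matrix.mulVec_mulVec, Matrix.mul_nonsing_inv _ hM.isUnit,
      Matrix.one_mulVec]
  exact ⟨_, (congrFun w_eq i).symm⟩

lemma mem_of_sum_pow_mul_mem {E : IntermediateField K L} {n : ℕ} {a w : Fin n → L}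
    (ha : ∀ i, a i ∈ E) (hinj : Function.Injective a)
    (hw : ∀ j : Fin n, ∑ i, a i ^ (j : ℕ) * w i ∈ E) (i : Fin n) : w i ∈ E := by
  lift a to Fin n → E using ha
  have det_ne_zero : (Matrix.vandermonde a).transpose.det ≠ 0 := by
    rw [Matrix.det_transpose, Matrix.det_vandermonde_ne_zero_iff]
    exact fun i j hij ↦ hinj (congrArg _ hij)
  obtain ⟨u, hu⟩ := mem_range_algebraMap_of_mulVec (w := w) det_ne_zero (fun j ↦ ⟨⟨_, hw j⟩, rfl⟩) i
  exact hu ▸ u.2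

end FieldTheory

lemma coeff_prod_X_sub_C_mem {R σ : Type*} [CommRing R] [Nontrivial R] [SetLike σ R]
    [ZeroMemClass σ R] [OneMemClass σ R] {E : σ} {n : ℕ} {a : Fin n → R}
    (h : ∀ k : Fin n, (∏ i, (X - C (a i))).coeff k ∈ E) (k : ℕ) :
    (∏ i, (X - C (a i))).coeff k ∈ E := by
  have natDegree_eq : (∏ i, (X - C (a i))).natDegree = n := by simp
  have leadingCoeff_eq : (∏ i, (X - C (a i))).coeff n = 1 := by
    simpa only [natDegree_eq] using (Polynomial.monic_prod_X_sub_C a Finset.univ).coeff_natDegree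
  rcases lt_trichotomy k n with hk | rfl | hk
  · exact h ⟨k, hk⟩
  · exact leadingCoeff_eq ▸ one_mem E
  · rw [Polynomial.coeff_eq_zero_of_natDegree_lt (natDegree_eq.trans_lt hk)]
    exact zero_mem E

lemma exists_perm_of_map_prod_X_sub_C_eq {R ι : Type*} [CommRing R] [IsDomain R] [Fintype ι]
    {a : ι → R} (ha : Function.Injective a) {τ : R →+* R} (hτ : Function.Injective τ)
    (h : (∏ i, (X - C (a i))).map τ = ∏ i, (X - C (a i))) :
    ∃ p : Equiv.Perm ι, ∀ i, τ (a i) = a (p i) := by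
  have isRoot : ∀ i, ∃ j, τ (a i) = a j := by
    intro i
    have eval_eq_zero : (∏ j, (X - C (a j))).eval (τ (a i)) = 0 := by
      rw [← h, Polynomial.eval_map_apply, Polynomial.eval_prod,
        Finset.prod_eq_zero (Finset.mem_univ i) (by simp), map_zero]
    simpa [Polynomial.eval_prod, Finset.prod_eq_zero_iff, sub_eq_zero] using eval_eq_zero
  choose q hq using isRoot
  have q_injective : Function.Injective q := fun i j hij ↦ ha <| hτ <| by rw [hq, hq, hij]
  exact ⟨.ofBijective q (Finite.injective_iff_bijective.1 q_injective), hq⟩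

section RationalFunctionField

variable (K : Type) [Field K] (I : Type)

lemma permHom_Xvar (σ : Equiv.Perm I) (i : I) :
    permHom K I σ (Xvar K I i) = Xvar K I (σ i) := by
  rw [Xvar, permHom, MonoidHom.comp_apply, IsFractionRing.fieldEquivOfAlgEquivHom_apply,
    IsFractionRing.fieldEquivOfAlgEquiv_algebraMap]
  exact congrArg _ (MvPolynomial.rename_X _ _)

lemma algebraicIndependent_Xvar : AlgebraicIndependent K (Xvar K I) :=
  (MvPolynomial.algebraicIndependent_X I K).map' (f := Algebra.algHom K _ (RFF K I))
    (IsFractionRing.injective _ _)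

lemma adjoin_range_Xvar : adjoin K (Set.range (Xvar K I)) = ⊤ := by
  have algebraMap_mem (p : MvPolynomial I K) :
      algebraMap _ (RFF K I) p ∈ adjoin K (Set.range (Xvar K I)) := by
    induction p using MvPolynomial.induction_on with
    | C c => exact (adjoin K (Set.range (Xvar K I))).algebraMap_mem c
    | add p q hp hq => exact map_add (algebraMap _ (RFF K I)) p q ▸ add_mem hp hq
    | mul_X p i hp =>
      rw [map_mul]
      exact mul_mem hp (IntermediateField.subset_adjoin _ _ ⟨i, rfl⟩)
  refine eq_top_iff.2 fun z _ ↦ ?_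
  obtain ⟨p, q, -, rfl⟩ := IsFractionRing.div_surjective (MvPolynomial I K) z
  exact div_mem (algebraMap_mem p) (algebraMap_mem q)

end RationalFunctionField

/-- The action of the permutations of `α` on two copies of `α`, indexed by signs, in which odd
permutations also exchange the two copies. -/
def signedPerm (α : Type*) [Fintype α] [DecidableEq α] :
    Equiv.Perm α →* Equiv.Perm (α × ℤˣ) where
  toFun p := p.prodCongr (Equiv.mulLeft (sign p))
  map_one' := by ext <;> simp
  map_mul' p q := by ext <;> simp [mul_assoc]

lemma signedPerm_apply {α : Type*} [Fintype α] [DecidableEq α] (p : Equiv.Perm α) (i : α)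
    (ε : ℤˣ) : signedPerm α p (i, ε) = (p i, sign p * ε) := rfl

section Invariants

variable {R S : Type*} [CommRing R] [CommRing S] {n : ℕ}

/-- The sum `θ_ε` of the monomials in the Leibniz expansion of the Vandermonde determinant of `a`
that belong to the permutations of sign `ε`, taken without that sign. -/
def halfVandermonde (a : Fin n → R) (ε : ℤˣ) : R :=
  ∑ σ : Equiv.Perm (Fin n) with sign σ = ε, ∏ i, a (σ i) ^ (i : ℕ)

lemma map_halfVandermonde (f : R →+* S) (a : Fin n → R) (ε : ℤˣ) :
    f (halfVandermonde a ε) = halfVandermonde (f ∘ a) ε := by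
  simp [halfVandermonde]

lemma halfVandermonde_comp_perm (a : Fin n → R) (p : Equiv.Perm (Fin n)) (ε : ℤˣ) :
    halfVandermonde (a ∘ p) ε = halfVandermonde a (sign p * ε) := by
  refine Finset.sum_equiv (Equiv.mulLeft p) (fun σ ↦ ?_) fun σ _ ↦ rfl
  simp

lemma halfVandermonde_one_sub_halfVandermonde_neg_one (a : Fin n → R) :
    halfVandermonde a 1 - halfVandermonde a (-1) = (Matrix.vandermonde a).det := by
  symm
  calc (Matrix.vandermonde a).det
      = ∑ σ, sign σ • ∏ i, a (σ i) ^ (i : ℕ) := Matrix.det_apply _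
    _ = ∑ ε, ∑ σ with sign σ = ε, sign σ • ∏ i, a (σ i) ^ (i : ℕ) :=
        (Finset.sum_fiberwise _ _ _).symm
    _ = ∑ ε : ℤˣ, ε • halfVandermonde a ε := by
        refine Finset.sum_congr rfl fun ε _ ↦ ?_
        rw [halfVandermonde, Finset.smul_sum]
        exact Finset.sum_congr rfl fun σ hσ ↦ by rw [(Finset.mem_filter.1 hσ).2]
    _ = halfVandermonde a 1 - halfVandermonde a (-1) := by simp [sub_eq_add_neg]

/-- The sums `aᵢ = x (i, 1) + x (i, -1)`. -/
def pairSum {α : Type*} (x : α × ℤˣ → R) (i : α) : R := ∑ ε, x (i, ε)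

lemma map_pairSum {α : Type*} [Fintype α] [DecidableEq α] {x : α × ℤˣ → R} {g : R →+* R}
    {p : Equiv.Perm α} (hg : ∀ q, g (x q) = x (signedPerm _ p q)) (i : α) :
    g (pairSum x i) = pairSum x (p i) := by
  simp only [pairSum, map_sum, hg, signedPerm_apply]
  exact Equiv.sum_comp (Equiv.mulLeft (sign p)) fun ε ↦ x (p i, ε)

lemma pairSum_injective_of_algebraicIndependent {α : Type*} [Nontrivial R] [Algebra R S]
    {x : α × ℤˣ → S} (hx : AlgebraicIndependent R x) : Function.Injective (pairSum x) := by
  intro i j hij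
  have sum_X_eq : (∑ ε, MvPolynomial.X (i, ε) : MvPolynomial (α × ℤˣ) R) =
      ∑ ε, MvPolynomial.X (j, ε) := hx (by simpa [pairSum] using hij)
  by_contra hne
  classical
  have eval_eq := congrArg (MvPolynomial.eval fun q ↦ if q = (i, 1) then 1 else 0) sum_X_eq
  simp [Ne.symm hne] at eval_eq

/-- The combinations `wᵢ = θ₁ * x (i, 1) + θ₋₁ * x (i, -1)`, in which the action of the sign is
absorbed by the weights. -/
def weightedSum (x : Fin n × ℤˣ → R) (i : Fin n) : R :=
  ∑ ε, halfVandermonde (pairSum x) ε * x (i, ε)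

/-- The `2 n` generators of the field of invariants: the nonleading coefficients of `∏ (X - aᵢ)`
and the weighted power sums `∑ aᵢ ^ j * wᵢ` for `j < n`. -/
def invariantGen (x : Fin n × ℤˣ → R) : Fin n ⊕ Fin n → R :=
  Sum.elim (fun k ↦ (∏ i, (X - C (pairSum x i))).coeff k)
    fun j ↦ ∑ i, pairSum x i ^ (j : ℕ) * weightedSum x i

section Equivariance

variable {x : Fin n × ℤˣ → R} {g : R →+* R} {p : Equiv.Perm (Fin n)}

lemma map_weightedSum (hg : ∀ q, g (x q) = x (signedPerm _ p q)) (i : Fin n) :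
    g (weightedSum x i) = weightedSum x (p i) := by
  have comp_pairSum : g ∘ pairSum x = pairSum x ∘ p := funext (map_pairSum hg)
  simp only [weightedSum, map_sum, map_mul, map_halfVandermonde, comp_pairSum,
    halfVandermonde_comp_perm, hg, signedPerm_apply]
  exact Equiv.sum_comp (Equiv.mulLeft (sign p))
    fun ε ↦ halfVandermonde (pairSum x) ε * x (p i, ε)

lemma map_invariantGen (hg : ∀ q, g (x q) = x (signedPerm _ p q)) (k : Fin n ⊕ Fin n) :
    g (invariantGen x k) = invariantGen x k := by
  rcases k with k | j
  · simp only [invariantGen, Sum.elim_inl]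
    rw [← Polynomial.coeff_map, Polynomial.map_prod]
    simp only [Polynomial.map_sub, Polynomial.map_X, Polynomial.map_C, map_pairSum hg]
    rw [Equiv.prod_comp p fun i ↦ X - C (pairSum x i)]
  · simp only [invariantGen, Sum.elim_inr, map_sum, map_mul, map_pow, map_pairSum hg,
      map_weightedSum hg]
    exact Equiv.sum_comp p fun i ↦ pairSum x i ^ (j : ℕ) * weightedSum x i

end Equivariance

end Invariants

section FieldOfInvariants

variable {K L : Type*} [Field K] [Field L] [Algebra K L] {n : ℕ} {x : Fin n × ℤˣ → L}

lemma mem_of_pairSum_mem_of_invariantGen_mem {E : IntermediateField K L}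
    (hinj : Function.Injective (pairSum x)) (ha : ∀ i, pairSum x i ∈ E)
    (ht : ∀ k, invariantGen x k ∈ E) (q : Fin n × ℤˣ) : x q ∈ E := by
  set θ := halfVandermonde (pairSum x) with hθ
  have pairSum_eq (i) : pairSum x i = x (i, 1) + x (i, -1) := by
    simp [pairSum]
  have weightedSum_eq (i) : weightedSum x i = θ 1 * x (i, 1) + θ (-1) * x (i, -1) := by
    simp [weightedSum, hθ]
  have θ_mem (ε) : θ ε ∈ E := sum_mem fun σ _ ↦ prod_mem fun i _ ↦ pow_mem (ha _) _
  have θ_sub_ne_zero : θ 1 - θ (-1) ≠ 0 := by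
    rwa [hθ, halfVandermonde_one_sub_halfVandermonde_neg_one, Matrix.det_vandermonde_ne_zero_iff]
  have weightedSum_mem (i) : weightedSum x i ∈ E :=
    mem_of_sum_pow_mul_mem ha hinj (fun j ↦ ht (.inr j)) i
  have fst_mem (i) : x (i, 1) ∈ E := by
    have x_eq : x (i, 1) = (weightedSum x i - θ (-1) * pairSum x i) / (θ 1 - θ (-1)) := by
      rw [eq_div_iff θ_sub_ne_zero, weightedSum_eq, pairSum_eq]
      ring
    rw [x_eq]
    exact div_mem (sub_mem (weightedSum_mem i) (mul_mem (θ_mem _) (ha i)))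
      (sub_mem (θ_mem _) (θ_mem _))
  obtain ⟨i, ε⟩ := q
  obtain rfl | rfl := Int.units_eq_one_or ε
  · exact fst_mem i
  · have x_eq : x (i, -1) = pairSum x i - x (i, 1) := by rw [pairSum_eq, add_sub_cancel_left]
    exact x_eq ▸ sub_mem (ha i) (fst_mem i)

lemma adjoin_invariantGen_union_pairSum (hinj : Function.Injective (pairSum x))
    (hgen : adjoin K (Set.range x) = ⊤) :
    adjoin K (Set.range (invariantGen x) ∪ Set.range (pairSum x)) = ⊤ := by
  rw [eq_top_iff, ← hgen, IntermediateField.adjoin_le_iff, Set.range_subset_iff]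
  exact mem_of_pairSum_mem_of_invariantGen_mem hinj
    (fun i ↦ IntermediateField.subset_adjoin _ _ (.inr ⟨i, rfl⟩))
    (fun k ↦ IntermediateField.subset_adjoin _ _ (.inl ⟨k, rfl⟩))

lemma isGalois_adjoin_invariantGen (hinj : Function.Injective (pairSum x))
    (hgen : adjoin K (Set.range x) = ⊤) : IsGalois (adjoin K (Set.range (invariantGen x))) L := by
  refine isGalois_of_coeff_prod_X_sub_C_mem hinj (fun k ↦ ?_) ?_
  · have coeff_mem := coeff_prod_X_sub_C_mem (a := pairSum x) (fun k ↦
      IntermediateField.subset_adjoin K (Set.range (invariantGen x)) ⟨.inl k, rfl⟩) k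
    exact ⟨⟨_, coeff_mem⟩, rfl⟩
  · rw [← IntermediateField.restrictScalars_eq_top_iff (K := K),
      IntermediateField.adjoin_adjoin_left, adjoin_invariantGen_union_pairSum hinj hgen]

variable {ρ : Equiv.Perm (Fin n) →* (L ≃ₐ[K] L)}

lemma adjoin_invariantGen_le_fixedField (hρ : ∀ p q, ρ p (x q) = x (signedPerm _ p q)) :
    adjoin K (Set.range (invariantGen x)) ≤ fixedField ρ.range := by
  rw [IntermediateField.adjoin_le_iff, Set.range_subset_iff]
  refine fun k ↦ (IntermediateField.mem_fixedField_iff _ _).2 ?_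
  rintro _ ⟨p, rfl⟩
  exact map_invariantGen (g := (ρ p : L →+* L)) (hρ p) k

lemma fixingSubgroup_adjoin_invariantGen_le (hinj : Function.Injective (pairSum x))
    (hgen : adjoin K (Set.range x) = ⊤) (hρ : ∀ p q, ρ p (x q) = x (signedPerm _ p q)) :
    (adjoin K (Set.range (invariantGen x))).fixingSubgroup ≤ ρ.range := by
  intro τ hτ
  rw [IntermediateField.mem_fixingSubgroup_iff] at hτ
  have gen_mem (k) : invariantGen x k ∈ adjoin K (Set.range (invariantGen x)) :=
    IntermediateField.subset_adjoin _ _ ⟨k, rfl⟩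
  obtain ⟨p, hp⟩ := exists_perm_of_map_prod_X_sub_C_eq hinj (τ := (τ : L →+* L)) τ.injective <| by
    ext k
    rw [Polynomial.coeff_map]
    exact hτ _ (coeff_prod_X_sub_C_mem (fun k ↦ gen_mem (.inl k)) k)
  refine ⟨p, eq_of_eqOn_of_adjoin_eq_top (adjoin_invariantGen_union_pairSum hinj hgen) ?_⟩
  rintro _ (⟨k, rfl⟩ | ⟨i, rfl⟩)
  · rw [hτ _ (gen_mem k)]
    exact map_invariantGen (g := (ρ p : L →+* L)) (hρ p) k
  · exact (map_pairSum (g := (ρ p : L →+* L)) (hρ p) i).trans (hp i).symm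

end FieldOfInvariants

theorem isRatExt_fixedField_range {K : Type} {L : Type*} [Field K] [Field L] [Algebra K L] {n : ℕ}
    {x : Fin n × ℤˣ → L} {ρ : Equiv.Perm (Fin n) →* (L ≃ₐ[K] L)} (hind : AlgebraicIndependent K x)
    (hgen : adjoin K (Set.range x) = ⊤) (hρ : ∀ p q, ρ p (x q) = x (signedPerm _ p q)) :
    IsRatExt K (fixedField ρ.range) := by
  have hinj : Function.Injective (pairSum x) := pairSum_injective_of_algebraicIndependent hind
  have := isGalois_adjoin_invariantGen hinj hgen
  rw [fixedField_eq_of_fixingSubgroup_le (adjoin_invariantGen_le_fixedField hρ)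
    (fixingSubgroup_adjoin_invariantGen_le hinj hgen hρ)]
  refine isRatExt_adjoin_of_algebraicIndependent
    (algebraicIndependent_of_isAlgebraic_adjoin hind ?_)
  simp [mul_two]

/-- The action of the symmetric group on `I` through a numbering of `I` by `Fin n × ℤˣ`. -/
def signedPermOn {n : ℕ} {I : Type*} (e : Fin n × ℤˣ ≃ I) : Equiv.Perm (Fin n) →* Equiv.Perm I :=
  e.permCongrHom.toMonoidHom.comp (signedPerm (Fin n))

theorem rationality_G14_general (K : Type) [Field K] {n : ℕ} {I : Type} (e : Fin n × ℤˣ ≃ I) :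
    IsRatExt K (fixedSub K I (signedPermOn e).range) := by
  rw [fixedSub, MonoidHom.map_range]
  refine isRatExt_fixedField_range (x := Xvar K I ∘ e)
    ((algebraicIndependent_Xvar K I).comp e e.injective) ?_ fun p q ↦ ?_
  · rw [e.surjective.range_comp, adjoin_range_Xvar]
  · simp [permHom_Xvar, signedPermOn]

/-- The numbering of the variables in which `x_{i+1}` and `x_{i+5}` form the `i`-th pair. -/
def pairIndex : Fin 4 × ℤˣ ≃ Fin 8 where
  toFun q := if q.2 = 1 then ![0, 1, 2, 3] q.1 else ![4, 5, 6, 7] q.1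
  invFun := ![(0, 1), (1, 1), (2, 1), (3, 1), (0, -1), (1, -1), (2, -1), (3, -1)]
  left_inv := by decide
  right_inv := by decide

lemma closure_perm_fin_four_eq_top : Subgroup.closure
    {Equiv.swap (0 : Fin 4) 2 * Equiv.swap 1 3, Equiv.swap 1 2 * Equiv.swap 2 3,
      Equiv.swap 0 1} = ⊤ := by
  have finRotate_eq : finRotate 4 = Equiv.swap 0 1 * (Equiv.swap 1 2 * Equiv.swap 2 3) := by decide
  rw [eq_top_iff, ← Equiv.Perm.closure_cycle_adjacent_swap isCycle_finRotate
    (support_finRotate (n := 2)) 0, Subgroup.closure_le]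
  rintro _ (rfl | rfl)
  · rw [finRotate_eq]
    exact mul_mem (Subgroup.subset_closure (by simp)) (Subgroup.subset_closure (by simp))
  · exact Subgroup.subset_closure (.inr (.inr rfl))

lemma closure_eq_range_signedPermOn_pairIndex : Subgroup.closure
      {Equiv.swap (0 : Fin 8) 2 * Equiv.swap 1 3 * Equiv.swap 4 6 * Equiv.swap 5 7,
       (Equiv.swap (1 : Fin 8) 2 * Equiv.swap 2 3) * (Equiv.swap (5 : Fin 8) 6 * Equiv.swap 6 7),
       Equiv.swap (0 : Fin 8) 5 * Equiv.swap 1 4 * Equiv.swap 2 6 * Equiv.swap 3 7} =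
    (signedPermOn pairIndex).range := by
  have map_double_swap : signedPermOn pairIndex (Equiv.swap 0 2 * Equiv.swap 1 3) =
      Equiv.swap 0 2 * Equiv.swap 1 3 * Equiv.swap 4 6 * Equiv.swap 5 7 := by decide
  have map_three_cycle : signedPermOn pairIndex (Equiv.swap 1 2 * Equiv.swap 2 3) =
      (Equiv.swap 1 2 * Equiv.swap 2 3) * (Equiv.swap 5 6 * Equiv.swap 6 7) := by decide
  have map_swap : signedPermOn pairIndex (Equiv.swap 0 1) =
      Equiv.swap 0 5 * Equiv.swap 1 4 * Equiv.swap 2 6 * Equiv.swap 3 7 := by decide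
  rw [MonoidHom.range_eq_map, ← closure_perm_fin_four_eq_top, MonoidHom.map_closure,
    Set.image_insert_eq, Set.image_pair, map_double_swap, map_three_cycle, map_swap]

/-- **Rationality for `G₁₄`.** For any field `K`, the subgroup `G₁₄ ⊆ S₈` of order 24 generated by `σ₂ = (1,3)(2,4)(5,7)(6,8)`, `φ̃₁ = (2,3,4)(6,7,8)` and `κ° = (1,6)(2,5)(3,7)(4,8)` has `K`-rational fixed field. -/
theorem rationality_G14 (K : Type) [Field K] :
    IsRatExt K ↥(fixedSub K (Fin 8) (Subgroup.closure
      {Equiv.swap (0 : Fin 8) 2 * Equiv.swap 1 3 * Equiv.swap 4 6 * Equiv.swap 5 7,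
       (Equiv.swap (1 : Fin 8) 2 * Equiv.swap 2 3) * (Equiv.swap (5 : Fin 8) 6 * Equiv.swap 6 7),
       Equiv.swap (0 : Fin 8) 5 * Equiv.swap 1 4 * Equiv.swap 2 6 * Equiv.swap 3 7})) := by
  rw [closure_eq_range_signedPermOn_pairIndex]
  exact rationality_G14_general K pairIndex
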